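/- Proposition 2.4 (optimality condition): let S and A be nonempty finite types, P : A → Matrix S S ℝ with each P a row-stochastic, R : S → ℝ, and γ ∈ ℝ with 0 < γ < 1. For a deterministic policy π : S → A let P^π be the matrix with P^π(s,j) = (P (π s))(s,j) and V^π = (I − γ·P^π)⁻¹ *ᵥ R. Then π is optimal (V^π(s) ≥ V^{π'}(s) for every deterministic policy π' : S → A and every s ∈ S) if and only if for every action a ∈ A, every component of the vector (P^π − P a) *ᵥ ((I − γ·P^π)⁻¹ *ᵥ R) is nonnegative. -/

import Mathlib

open Matrix BigOperators

/-- A matrix is row-stochastic if all entries are nonnegative and every row sums to 1. -/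
def RowStochastic {S : Type*} [Fintype S] (P : Matrix S S ℝ) : Prop :=
  (∀ i j, 0 ≤ P i j) ∧ (∀ i, ∑ j, P i j = 1)

/-- The transition matrix `P^π` of a deterministic policy `π`:
`P^π(s, j) = (P (π s))(s, j)`. -/
def polMat {S A : Type*} (P : A → Matrix S S ℝ) (π : S → A) : Matrix S S ℝ :=
  Matrix.of fun s j => P (π s) s j

/-- The value vector `V^π = (I - γ • P^π)⁻¹ *ᵥ R` of a deterministic policy `π`. -/
noncomputable def polVal {S A : Type*} [Fintype S] [DecidableEq S]
    (P : A → Matrix S S ℝ) (γ : ℝ) (R : S → ℝ) (π : S → A) : S → ℝ :=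
  (1 - γ • polMat P π)⁻¹ *ᵥ R

/-!
The value `V^π` is the unique solution of the Bellman equation `V = R + γ • P^π *ᵥ V`, and a minimum
argument shows that every subsolution of such an equation lies below every supersolution.
If the advantage of `π` is nonnegative, then `V^π` is a supersolution of the Bellman equation of any
policy, so it dominates all values. If action `a` has negative advantage at `s`, switching `π` to
`a` at `s` makes `V^π` a subsolution of the new equation, but not a solution; so the new value is
at least `V^π` and different from it.
-/

section StrictlySubstochastic

variable {n K : Type*} [Fintype n]

/-- A square matrix is strictly substochastic if its entries are nonnegative and each of its rows
sums to less than one. It is the property of the discounted transition matrices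
`γ • P a` that makes `1 - M` invertible with a monotone inverse. -/
structure IsStrictlySubstochastic [Semiring K] [Preorder K] (M : Matrix n n K) : Prop where
  nonneg : ∀ i j, 0 ≤ M i j
  sum_row_lt_one : ∀ i, ∑ j, M i j < 1

namespace IsStrictlySubstochastic

section Ring

variable [Ring K] [LinearOrder K] [IsStrictOrderedRing K] {M : Matrix n n K}

theorem nonneg_of_mulVec_le (hM : IsStrictlySubstochastic M) {x : n → K} (hx : M *ᵥ x ≤ x) :
    0 ≤ x := by
  intro i
  have : Nonempty n := ⟨i⟩
  obtain ⟨m, hm⟩ := Finite.exists_min x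
  suffices h : 0 ≤ x m from h.trans (hm i)
  by_contra! hneg
  have : x m < x m :=
    calc x m < (∑ j, M m j) * x m := lt_mul_of_lt_one_left hneg (hM.sum_row_lt_one m)
      _ = ∑ j, M m j * x m := Finset.sum_mul ..
      _ ≤ (M *ᵥ x) m :=
        Finset.sum_le_sum fun j _ => mul_le_mul_of_nonneg_left (hm j) (hM.nonneg m j)
      _ ≤ x m := hx m
  exact this.false

theorem subsolution_le_supersolution (hM : IsStrictlySubstochastic M) {r x y : n → K}
    (hx : x ≤ r + M *ᵥ x) (hy : r + M *ᵥ y ≤ y) : x ≤ y := by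
  refine sub_nonneg.mp (hM.nonneg_of_mulVec_le ?_)
  calc M *ᵥ (y - x) = (r + M *ᵥ y) - (r + M *ᵥ x) := by
        rw [mulVec_sub, add_sub_add_left_eq_sub]
    _ ≤ y - x := sub_le_sub hy hx

end Ring

variable [Field K] [LinearOrder K] [IsStrictOrderedRing K] [DecidableEq n] {M : Matrix n n K}

theorem isUnit_one_sub (hM : IsStrictlySubstochastic M) : IsUnit (1 - M) := by
  rw [← mulVec_injective_iff_isUnit]
  intro x y hxy
  have hx : x = (1 - M) *ᵥ x + M *ᵥ x := by rw [← add_mulVec, sub_add_cancel, one_mulVec]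
  have hy : y = (1 - M) *ᵥ x + M *ᵥ y := by
    rw [show (1 - M) *ᵥ x = (1 - M) *ᵥ y from hxy, ← add_mulVec, sub_add_cancel, one_mulVec]
  exact le_antisymm (hM.subsolution_le_supersolution hx.le hy.ge)
    (hM.subsolution_le_supersolution hy.le hx.ge)

theorem inv_one_sub_mulVec_eq (hM : IsStrictlySubstochastic M) (r : n → K) :
    (1 - M)⁻¹ *ᵥ r = r + M *ᵥ ((1 - M)⁻¹ *ᵥ r) := by
  have hdet : IsUnit (1 - M).det := (isUnit_iff_isUnit_det _).mp hM.isUnit_one_sub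
  have hsolve : (1 - M) *ᵥ ((1 - M)⁻¹ *ᵥ r) = r := by
    rw [mulVec_mulVec, mul_nonsing_inv _ hdet, one_mulVec]
  rwa [sub_mulVec, one_mulVec, sub_eq_iff_eq_add] at hsolve

end IsStrictlySubstochastic

end StrictlySubstochastic

section RowSelection

variable {A m n K : Type*}

/-- The matrix whose row `s` is row `s` of `M (π s)`; for `M = P` this is the transition matrix
`P^π`, and for `M = γ • P` it is the discounted matrix `γ • P^π`. -/
def rowSelection (M : A → Matrix m n K) (π : m → A) : Matrix m n K :=
  Matrix.of fun s => M (π s) s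

theorem rowSelection_update_mulVec [NonUnitalNonAssocSemiring K] [Fintype n] [DecidableEq m]
    (M : A → Matrix m n K) (π : m → A) (s : m) (a : A) (v : n → K) :
    rowSelection M (Function.update π s a) *ᵥ v =
      Function.update (rowSelection M π *ᵥ v) s ((M a *ᵥ v) s) := by
  ext t
  obtain rfl | hts := eq_or_ne t s
  · simp [rowSelection, mulVec]
  · simp [rowSelection, mulVec, hts]

theorem isStrictlySubstochastic_rowSelection [Fintype n] [Semiring K] [Preorder K]
    {M : A → Matrix n n K} (hM : ∀ a, IsStrictlySubstochastic (M a)) (π : n → A) :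
    IsStrictlySubstochastic (rowSelection M π) where
  nonneg s := (hM (π s)).nonneg s
  sum_row_lt_one s := (hM (π s)).sum_row_lt_one s

variable [Field K] [Fintype n] [DecidableEq n]

/-- The value of the policy `π` with reward `r`, where the discount factor is absorbed into the
matrices `M a`: for `M = γ • P` this is `polVal P γ r π`. -/
noncomputable def selectionValue (M : A → Matrix n n K) (r : n → K) (π : n → A) : n → K :=
  (1 - rowSelection M π)⁻¹ *ᵥ r

variable [LinearOrder K] [IsStrictOrderedRing K] {M : A → Matrix n n K} {r : n → K} {π : n → A}

theorem selectionValue_eq_add_mulVec (hM : ∀ a, IsStrictlySubstochastic (M a)) (r : n → K)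
    (π : n → A) : selectionValue M r π = r + rowSelection M π *ᵥ selectionValue M r π :=
  (isStrictlySubstochastic_rowSelection hM π).inv_one_sub_mulVec_eq r

theorem selectionValue_le_of_add_mulVec_le (hM : ∀ a, IsStrictlySubstochastic (M a)) {v : n → K}
    (hv : r + rowSelection M π *ᵥ v ≤ v) : selectionValue M r π ≤ v :=
  (isStrictlySubstochastic_rowSelection hM π).subsolution_le_supersolution
    (selectionValue_eq_add_mulVec hM r π).le hv

theorem le_selectionValue_of_le_add_mulVec (hM : ∀ a, IsStrictlySubstochastic (M a)) {v : n → K}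
    (hv : v ≤ r + rowSelection M π *ᵥ v) : v ≤ selectionValue M r π :=
  (isStrictlySubstochastic_rowSelection hM π).subsolution_le_supersolution
    hv (selectionValue_eq_add_mulVec hM r π).ge

theorem selectionValue_le_of_forall_mulVec_le (hM : ∀ a, IsStrictlySubstochastic (M a))
    (hπ : ∀ a, M a *ᵥ selectionValue M r π ≤ rowSelection M π *ᵥ selectionValue M r π)
    (π' : n → A) : selectionValue M r π' ≤ selectionValue M r π := by
  have hπ' : rowSelection M π' *ᵥ selectionValue M r π ≤
      rowSelection M π *ᵥ selectionValue M r π := fun s => hπ (π' s) s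
  apply selectionValue_le_of_add_mulVec_le hM
  calc r + rowSelection M π' *ᵥ selectionValue M r π
      ≤ r + rowSelection M π *ᵥ selectionValue M r π := by gcongr
    _ = selectionValue M r π := (selectionValue_eq_add_mulVec hM r π).symm

theorem selectionValue_lt_selectionValue_update (hM : ∀ a, IsStrictlySubstochastic (M a))
    {s : n} {a : A}
    (ha : (rowSelection M π *ᵥ selectionValue M r π) s < (M a *ᵥ selectionValue M r π) s) :
    selectionValue M r π < selectionValue M r (Function.update π s a) := by
  have hrows : rowSelection M π *ᵥ selectionValue M r π <
      rowSelection M (Function.update π s a) *ᵥ selectionValue M r π := by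
    rwa [rowSelection_update_mulVec, lt_update_self_iff]
  have hsub : selectionValue M r π <
      r + rowSelection M (Function.update π s a) *ᵥ selectionValue M r π :=
    calc selectionValue M r π = r + rowSelection M π *ᵥ selectionValue M r π :=
          selectionValue_eq_add_mulVec hM r π
      _ < r + rowSelection M (Function.update π s a) *ᵥ selectionValue M r π := by gcongr
  refine (le_selectionValue_of_le_add_mulVec hM hsub.le).lt_of_ne fun heq => ?_
  have hfixed := selectionValue_eq_add_mulVec hM r (Function.update π s a)
  rw [← heq] at hfixed
  exact hsub.ne hfixed

theorem optimal_iff_nonneg_advantage_general (hM : ∀ a, IsStrictlySubstochastic (M a))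
    (r : n → K) (π : n → A) :
    (∀ π' : n → A, selectionValue M r π' ≤ selectionValue M r π) ↔
      ∀ a : A, 0 ≤ (rowSelection M π - M a) *ᵥ selectionValue M r π := by
  simp only [sub_mulVec, sub_nonneg]
  refine ⟨fun hopt a s => ?_, selectionValue_le_of_forall_mulVec_le hM⟩
  by_contra! ha
  exact (selectionValue_lt_selectionValue_update hM ha).not_ge (hopt _)

end RowSelection

theorem RowStochastic.isStrictlySubstochastic_smul {S : Type*} [Fintype S] {Q : Matrix S S ℝ}
    (hQ : RowStochastic Q) {γ : ℝ} (hγ0 : 0 ≤ γ) (hγ1 : γ < 1) :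
    IsStrictlySubstochastic (γ • Q) where
  nonneg i j := mul_nonneg hγ0 (hQ.1 i j)
  sum_row_lt_one i := by
    simpa only [Matrix.smul_apply, smul_eq_mul, ← Finset.mul_sum, hQ.2 i, mul_one] using hγ1

theorem rowSelection_smul_sub_smul_mulVec_nonneg_iff {S A : Type*} [Fintype S]
    {P : A → Matrix S S ℝ} {γ : ℝ} (hγ : 0 < γ) (π : S → A) (a : A) (v : S → ℝ) :
    0 ≤ (rowSelection (γ • P) π - (γ • P) a) *ᵥ v ↔ 0 ≤ (polMat P π - P a) *ᵥ v := by
  have hsmul : rowSelection (γ • P) π - (γ • P) a = γ • (polMat P π - P a) :=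
    (smul_sub γ (polMat P π) (P a)).symm
  rw [hsmul, smul_mulVec, smul_nonneg_iff_nonneg_of_pos_left hγ]

/-- Proposition 2.4: a deterministic policy `π` is optimal if and only if
`(P^π - P^a) (I - γ P^π)⁻¹ R ≥ 0` for every action `a`. -/
theorem optimal_iff_nonneg_advantage {S A : Type*} [Fintype S] [DecidableEq S] [Nonempty S]
    [Fintype A] [Nonempty A] (P : A → Matrix S S ℝ) (hP : ∀ a, RowStochastic (P a))
    (R : S → ℝ) (γ : ℝ) (hγ0 : 0 < γ) (hγ1 : γ < 1) (π : S → A) :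
    (∀ π' : S → A, ∀ s : S, polVal P γ R π' s ≤ polVal P γ R π s) ↔
    (∀ a : A, ∀ s : S, 0 ≤ ((polMat P π - P a) *ᵥ ((1 - γ • polMat P π)⁻¹ *ᵥ R)) s) :=
  (optimal_iff_nonneg_advantage_general (M := γ • P)
    (fun a => (hP a).isStrictlySubstochastic_smul hγ0.le hγ1) R π).trans
    (forall_congr' fun a => rowSelection_smul_sub_smul_mulVec_nonneg_iff hγ0 π a _)
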